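/- Let k be an algebraically closed field of characteristic 0 and let A be a finitely generated commutative k-algebra which is an integral domain and a smooth k-algebra (the coordinate ring of a smooth irreducible affine variety X), and assume Der_k(A) ≠ 0 (equivalently, X has positive dimension). Then Der_k(A), the Lie algebra of polynomial vector fields on X, is a simple Lie algebra over k: it is non-abelian and its only Lie ideals are 0 and Der_k(A). -/

import Mathlib

open KaehlerDifferential in
/-- An Euler-type derivation at a maximal ideal with residue field `k`. -/
theorem exists_euler {k A : Type*} [Field k] [CommRing A] [Algebra k A]
    [Module.Projective A (Ω[A⁄k])] (m : Ideal A) (ev : A →ₐ[k] k)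
    (hev : ∀ a, a ∈ m ↔ ev a = 0) :
    ∃ E : Derivation k A A, (∀ a, E a ∈ m) ∧ (∀ a ∈ m, E a - a ∈ m ^ 2) ∧
      ∀ I J : Ideal A, (∀ (d : Derivation k A A), ∀ f ∈ I, d f ∈ J) →
        ∀ f ∈ I, E f ∈ J * m := by
  have hmem : ∀ a, a - algebraMap k A (ev a) ∈ m := fun a => by
    rw [hev]; simp
  let p : A →ₗ[k] m :=
    { toFun := fun a => ⟨a - algebraMap k A (ev a), hmem a⟩
      map_add' := fun a b => by ext; simp; ring
      map_smul' := fun c a => by ext; simp [Algebra.smul_def]; ring }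
  let D : Derivation k A m.Cotangent :=
    Derivation.mk' ((m.toCotangent.restrictScalars k).comp p) (by
      intro a b
      simp only [LinearMap.comp_apply, LinearMap.restrictScalars_apply]
      rw [← map_smul m.toCotangent, ← map_smul m.toCotangent, ← map_add m.toCotangent, ← sub_eq_zero, ← map_sub,
        Ideal.toCotangent_eq_zero]
      have : ((p (a * b) - (a • p b + b • p a) : m) : A) =
          -((a - algebraMap k A (ev a)) * (b - algebraMap k A (ev b))) := by
        simp [p]; ring
      rw [this, pow_two]
      exact neg_mem (Ideal.mul_mem_mul (hmem a) (hmem b)))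
  let L : (m →₀ A) →ₗ[A] m := Finsupp.linearCombination A id
  have hL : Function.Surjective L := fun x => ⟨Finsupp.single x 1, by simp [L]⟩
  obtain ⟨F, hF⟩ := Module.projective_lifting_property (m.toCotangent.comp L)
    D.liftKaehlerDifferential ((m.toCotangent_surjective).comp hL)
  let E : Derivation k A A := ((m.subtype.comp L).comp F).compDer (KaehlerDifferential.D k A)
  have hE : ∀ a, E a = (L (F (KaehlerDifferential.D k A a)) : A) := fun a => rfl
  refine ⟨E, fun a => by rw [hE]; exact SetLike.coe_mem _, fun a ha => ?_, fun I J h f hf => ?_⟩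
  · have h1 := LinearMap.congr_fun hF (KaehlerDifferential.D k A a)
    simp only [LinearMap.comp_apply, Derivation.liftKaehlerDifferential_comp_D] at h1
    have h2 : m.toCotangent (L (F (KaehlerDifferential.D k A a))) = m.toCotangent (p a) := h1
    rw [Ideal.toCotangent_eq] at h2
    have h3 : ((p a : m) : A) = a := by simp [p, (hev a).1 ha]
    rwa [h3] at h2
  · rw [hE]
    have : (L (F (KaehlerDifferential.D k A f)) : A) =
        (F (KaehlerDifferential.D k A f)).sum fun x c => c * (x : A) := by
      simp [L, Finsupp.linearCombination_apply, Finsupp.sum]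
    rw [this]
    refine Ideal.sum_mem _ fun x _ => Ideal.mul_mem_mul ?_ x.2
    exact h (((Finsupp.lapply x).comp F).compDer (KaehlerDifferential.D k A)) f hf

theorem euler_pow {k A : Type*} [Field k] [CommRing A] [Algebra k A] (m : Ideal A)
    (E : Derivation k A A) (h0 : ∀ a, E a ∈ m) (h1 : ∀ a ∈ m, E a - a ∈ m ^ 2) (n : ℕ) :
    ∀ f ∈ m ^ n, E f - (n : A) * f ∈ m ^ (n + 1) := by
  induction n with
  | zero => intro f _; simpa using h0 f
  | succ n ih =>
    intro f hf
    rw [pow_succ] at hf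
    refine Submodule.mul_induction_on hf (fun a ha b hb => ?_) (fun x y hx hy => ?_)
    · have e : E (a * b) - ((n + 1 : ℕ) : A) * (a * b) =
          a * (E b - b) + (E a - (n : A) * a) * b := by
        simp; ring
      rw [e]
      refine add_mem ?_ ?_
      · have := Ideal.mul_mem_mul ha (h1 b hb)
        rwa [← pow_add] at this
      · have := Ideal.mul_mem_mul (ih a ha) hb
        rwa [← pow_succ] at this
    · have e : E (x + y) - ((n + 1 : ℕ) : A) * (x + y) =
          (E x - ((n + 1 : ℕ) : A) * x) + (E y - ((n + 1 : ℕ) : A) * y) := by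
        simp; ring
      rw [e]; exact add_mem hx hy

theorem exists_ev {k A : Type*} [Field k] [IsAlgClosed k] [CommRing A] [Algebra k A]
    [Algebra.FiniteType k A] (m : Ideal A) [hm : m.IsMaximal] :
    ∃ ev : A →ₐ[k] k, ∀ a, a ∈ m ↔ ev a = 0 := by
  let : Field (A ⧸ m) := Ideal.Quotient.field m
  have : Algebra.FiniteType k (A ⧸ m) :=
    Algebra.FiniteType.of_surjective (Ideal.Quotient.mkₐ k m) (Ideal.Quotient.mkₐ_surjective k m)
  have : Module.Finite k (A ⧸ m) := finite_of_finite_type_of_isJacobsonRing k (A ⧸ m)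
  have hb : Function.Bijective (Algebra.ofId k (A ⧸ m)) :=
    IsAlgClosed.algebraMap_bijective_of_isIntegral
  let e := AlgEquiv.ofBijective _ hb
  refine ⟨(e.symm : (A ⧸ m) →ₐ[k] k).comp (Ideal.Quotient.mkₐ k m), fun a => ?_⟩
  simp [Ideal.Quotient.eq_zero_iff_mem]

/-- A smooth domain has no nontrivial derivation-stable ideals. -/
theorem der_simple {k A : Type*} [Field k] [IsAlgClosed k] [CharZero k]
    [CommRing A] [IsDomain A] [Algebra k A] [Algebra.FiniteType k A]
    [Algebra.FormallySmooth k A] (I : Ideal A)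
    (hI : ∀ (d : Derivation k A A), ∀ f ∈ I, d f ∈ I) (h0 : I ≠ ⊥) : I = ⊤ := by
  by_contra hne
  obtain ⟨m, hm, hle⟩ := Ideal.exists_le_maximal I hne
  obtain ⟨ev, hev⟩ := exists_ev (k := k) m
  have := Algebra.FormallySmooth.projective_kaehlerDifferential (R := k) (A := A)
  obtain ⟨E, hE0, hE1, hE2⟩ := exists_euler m ev hev
  have : IsNoetherianRing A := Algebra.FiniteType.isNoetherianRing k A
  have key : ∀ n : ℕ, I ≤ m ^ (n + 1) := by
    intro n
    induction n with
    | zero => simpa using hle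
    | succ n ih =>
      intro f hf
      have h2 : E f ∈ m ^ (n + 1 + 1) := by
        rw [pow_succ]; exact hE2 I _ (fun d f hf => ih (hI d f hf)) f hf
      have h3 := euler_pow m E hE0 hE1 (n + 1) f (ih hf)
      have h4 : ((n + 1 : ℕ) : A) * f ∈ m ^ (n + 1 + 1) := by
        have := sub_mem h2 h3
        simpa using this
      have h5 := Ideal.mul_mem_left _ (algebraMap k A (((n + 1 : ℕ) : k)⁻¹)) h4
      have hn : ((n + 1 : ℕ) : k) ≠ 0 := Nat.cast_ne_zero.2 (Nat.succ_ne_zero n)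
      rwa [← mul_assoc, ← map_natCast (algebraMap k A) (n + 1), ← map_mul,
        inv_mul_cancel₀ hn, map_one, one_mul] at h5
  apply h0
  rw [eq_bot_iff, ← Ideal.iInf_pow_eq_bot_of_isDomain m hm.ne_top]
  refine le_iInf fun n => (key n).trans (Ideal.pow_le_pow_right n.le_succ)

/-- A nonzero Lie ideal contains `c • d` for all `d`, for some fixed nonzero `c`. -/
theorem exists_coeff {k A : Type*} [Field k] [CharZero k]
    [CommRing A] [IsDomain A] [Algebra k A] (J : LieIdeal k (Derivation k A A)) (hJ : J ≠ ⊥) :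
    ∃ c : A, c ≠ 0 ∧ ∀ d : Derivation k A A, c • d ∈ J := by
  have htwo : (2 : A) ≠ 0 := by
    have : algebraMap k A 2 ≠ 0 := by
      rw [Ne, FaithfulSMul.algebraMap_eq_zero_iff]; exact two_ne_zero
    rwa [map_ofNat] at this
  have half : ∀ x : Derivation k A A, (2 : A) • x ∈ J → x ∈ J := by
    intro x hx
    have h := J.smul_mem ((2 : k)⁻¹) hx
    have e : (2 : k)⁻¹ • (2 : A) • x = x := by
      have : (2 : A) • x = (2 : k) • x := by rw [two_smul, two_smul]
      rw [this, smul_smul, inv_mul_cancel₀ two_ne_zero, one_smul]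
    rwa [e] at h
  obtain ⟨δ, hδ, hδ0⟩ : ∃ δ ∈ J, δ ≠ 0 := by
    by_contra! hz
    exact hJ ((LieSubmodule.eq_bot_iff J).2 hz)
  have hbr : ∀ x ∈ J, ∀ y : Derivation k A A, ⁅x, y⁆ ∈ J := fun x hx y => lie_mem_left k _ J x y hx
  -- first key relation
  have h1 : ∀ a : A, δ a • δ ∈ J := by
    intro a
    have := hbr δ hδ (a • δ)
    have e : ⁅δ, a • δ⁆ = δ a • δ := by
      ext x; simp [Derivation.commutator_apply]
      try ring
    rwa [e] at this
  -- second key relation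
  have h2 : ∀ f : A, f • δ ∈ J → ∀ (b : A) (d : Derivation k A A),
      (b * d f) • δ + (b * δ f) • d ∈ J := by
    intro f hf b d
    have := sub_mem (hbr δ hδ ((f * b) • d)) (hbr _ hf (b • d))
    have e : ⁅δ, (f * b) • d⁆ - ⁅f • δ, b • d⁆ = (b * d f) • δ + (b * δ f) • d := by
      ext x; simp [Derivation.commutator_apply]
      try ring
    rwa [e] at this
  -- `δ` has nonzero square
  have h3 : ∃ a, δ (δ a) ≠ 0 := by
    by_contra! hz
    apply hδ0
    ext a
    have := hz (a * a)
    simp [hz] at this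
    have hh1 : (2 : A) * (δ a * δ a) = 0 := by rw [two_mul]; exact this
    simpa [htwo] using hh1
  obtain ⟨a, ha⟩ := h3
  have h4 : ∀ b : A, (b * δ (δ a)) • δ ∈ J := by
    intro b
    apply half
    rw [two_smul]
    exact h2 (δ a) (h1 a) b δ
  have h5 : ∃ b, δ b ≠ 0 := by
    by_contra! hz
    exact hδ0 (by ext b; simpa using hz b)
  obtain ⟨b, hb⟩ := h5
  generalize δ (δ a) = g at ha h4
  have h6 : ∀ (c e : A) (d : Derivation k A A), (e * δ (g * g * c)) • d ∈ J := by
    intro c e d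
    have hA := h2 (g * g * c) (by convert h4 (g * c) using 2; ring) e d
    have hB := h4 (e * (2 * d g * c + g * d c))
    have := sub_mem hA hB
    have eq1 : (e * d (g * g * c)) • δ + (e * δ (g * g * c)) • d
        - (e * (2 * d g * c + g * d c) * g) • δ = (e * δ (g * g * c)) • d := by
      ext x; simp
      ring
    rwa [eq1] at this
  refine ⟨g * g * δ b, by simp [ha, hb], fun d => ?_⟩
  have := sub_mem (h6 b 1 d) (h6 1 b d)
  have eq1 : (1 * δ (g * g * b)) • d - (b * δ (g * g * 1)) • d = (g * g * δ b) • d := by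
    rw [← sub_smul]; congr 1; simp
    try ring
  rwa [eq1] at this

/-- The Lie algebra of polynomial vector fields on a smooth irreducible affine variety of
positive dimension is simple. -/
theorem derivations_isSimple_of_smooth.{u}
    (k : Type u) [Field k] [IsAlgClosed k] [CharZero k]
    (A : Type u) [CommRing A] [IsDomain A] [Algebra k A] [Algebra.FiniteType k A]
    [Algebra.Smooth k A]
    (hD : ∃ η : Derivation k A A, η ≠ 0) :
    LieAlgebra.IsSimple k (Derivation k A A) := by
  refine ⟨fun J => or_iff_not_imp_left.2 fun hJ => ?_, fun hab => ?_⟩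
  · obtain ⟨c, hc0, hc⟩ := exists_coeff J hJ
    let K : Ideal A :=
      { carrier := {c | ∀ d : Derivation k A A, c • d ∈ J}
        add_mem' := fun {x y} hx hy d => by rw [add_smul]; exact add_mem (hx d) (hy d)
        zero_mem' := fun d => by rw [zero_smul]; exact zero_mem J
        smul_mem' := fun b x hx d => by
          have := hx (b • d)
          rwa [smul_smul, mul_comm] at this }
    have hK : K = ⊤ := by
      refine der_simple (k := k) K (fun d f hf τ => ?_) fun h => hc0 ?_
      · have := sub_mem (lie_mem_right k _ J d (f • τ) (hf τ)) (hf ⁅d, τ⁆)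
        have e : ⁅d, f • τ⁆ - f • ⁅d, τ⁆ = d f • τ := by
          ext x; simp [Derivation.commutator_apply]
          try ring
        rwa [e] at this
      · have : c ∈ K := hc
        rwa [h] at this
    rw [eq_top_iff]
    intro d _
    have : (1 : A) ∈ K := hK ▸ Submodule.mem_top
    simpa using this d
  · obtain ⟨η, hη⟩ := hD
    apply hη
    ext a
    have h := hab.trivial η (a • η)
    have hh1 := congrArg (fun d : Derivation k A A => d a) h
    simpa [Derivation.commutator_apply] using hh1
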